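/- arXiv:2508.18461 — 4 statements merged into one kernel-verified Lean document; each statement's English description precedes it below -/
import Mathlib

section
/- Let C be a strong divisibility sequence, let p be an acceptable prime for C with parameter s = s(p), let n ≥ 0 have standard base-p representation n = n_ℓ ⋯ n_1 n_0, and let 0 ≤ r < α(p^s). Then T_{p,C}(α(p^s)·n + r, x) equals the matrix product [u_{p,C,0}(r), u_{p,C,1}(r)] · M_p(n_0) · M_p(n_1) ⋯ M_p(n_ℓ) · [1, 0]^T, where for λ ∈ {0,1}, u_{p,C,λ}(r) = Σ x^{f_{p,C,λ}(r,r_1,r_2) − λ}, the sum over pairs (r_1, r_2) ∈ {0,1,…,α(p^s)−1}^2 with r_1 + r_2 = r + λ·α(p^s). -/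
open Finset

/-- A strong divisibility sequence: nonzero integers `Cs 1, Cs 2, ...` with
`gcd (Cs n) (Cs m) = |Cs (gcd n m)|`. -/
def IsStrongDivSeq (Cs : ℕ → ℤ) : Prop :=
  (∀ n, 1 ≤ n → Cs n ≠ 0) ∧
  ∀ m n, 1 ≤ m → 1 ≤ n → Int.gcd (Cs n) (Cs m) = (Cs (Nat.gcd n m)).natAbs

/-- `a` is the rank of apparition of `m` in the sequence `Cs`:
the least index `j ≥ 1` such that `m ∣ Cs j`. -/
def IsRank (Cs : ℕ → ℤ) (m a : ℕ) : Prop :=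
  1 ≤ a ∧ (m : ℤ) ∣ Cs a ∧ ∀ j, 1 ≤ j → (m : ℤ) ∣ Cs j → a ≤ j

/-- The `C`-orial: `0!_C = 1`, `n!_C = Cs 1 * Cs 2 * ⋯ * Cs n`. -/
def Corial (Cs : ℕ → ℤ) : ℕ → ℤ
  | 0 => 1
  | n + 1 => Corial Cs n * Cs (n + 1)

/-- `p` is an acceptable prime for `Cs`, with `α k` the rank of apparition of `p ^ k`
and parameter `s = s(p)`. -/
def AcceptablePrime (Cs : ℕ → ℤ) (p : ℕ) (α : ℕ → ℕ) (s : ℕ) : Prop :=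
  1 ≤ s ∧ (∀ k, 1 ≤ k → IsRank Cs (p ^ k) (α k)) ∧
  (∀ k, s < k → α k = p ^ (k - s) * α s)

/-- The `p`-adic valuation of the `C`-nomial coefficient `binom(n, m)_C`,
defined as `ν_p(n!_C) - ν_p(m!_C) - ν_p((n-m)!_C)` (an integer). -/
def nuCnomial (p : ℕ) (Cs : ℕ → ℤ) (n m : ℕ) : ℤ :=
  (padicValInt p (Corial Cs n) : ℤ) - (padicValInt p (Corial Cs m) : ℤ)
    - (padicValInt p (Corial Cs (n - m)) : ℤ)

/-- `T_{p,C}(n, x) = ∑_{m=0}^{n} x ^ ν_p(binom(n,m)_C)`, a polynomial in `ℤ[x]`. -/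
noncomputable def Tpoly (p : ℕ) (Cs : ℕ → ℤ) (n : ℕ) : Polynomial ℤ :=
  ∑ m ∈ Finset.range (n + 1), Polynomial.X ^ (nuCnomial p Cs n m).toNat

/-- Rowland's matrix `M_p(d)` with rows `(d+1, p-d-1)` and `(dx, (p-d)x)`. -/
noncomputable def Mmat (p d : ℕ) : Matrix (Fin 2) (Fin 2) (Polynomial ℤ) :=
  !![Polynomial.C ((d : ℤ) + 1), Polynomial.C ((p : ℤ) - d - 1);
     Polynomial.C (d : ℤ) * Polynomial.X, Polynomial.C ((p : ℤ) - d) * Polynomial.X]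

/-- `f_{p,C,λ}(r, r₁, r₂)` from the acceptable-prime initial vector. -/
def fCnom (α : ℕ → ℕ) (s lam r r1 r2 : ℕ) : ℤ :=
  (lam : ℤ) * ∑ j ∈ Finset.Icc 1 s, ((α s / α j : ℕ) : ℤ)
  + ∑ j ∈ Finset.Icc 1 s,
      (((r / α j : ℕ) : ℤ) - ((r1 / α j : ℕ) : ℤ) - ((r2 / α j : ℕ) : ℤ))

/-- `u_{p,C,λ}(r) = ∑ x ^ (f_{p,C,λ}(r,r₁,r₂) - λ)`, summed over pairs
`(r₁, r₂) ∈ {0, …, α(p^s) - 1}²` with `r₁ + r₂ = r + λ · α(p^s)`. -/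
noncomputable def uCnom (α : ℕ → ℕ) (s lam r : ℕ) : Polynomial ℤ :=
  ∑ q ∈ (Finset.range (α s) ×ˢ Finset.range (α s)).filter
      (fun q => q.1 + q.2 = r + lam * α s),
    Polynomial.X ^ (fCnom α s lam r q.1 q.2 - lam).toNat

/-- pairs `(m,k)` with `m + k + c = N` -/
def Pset (c N : ℕ) : Finset (ℕ × ℕ) :=
  (Finset.range (N + 1) ×ˢ Finset.range (N + 1)).filter (fun q => q.1 + q.2 + c = N)

/-- pairs of residues -/
def Uset (q lam c d : ℕ) : Finset (ℕ × ℕ) :=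
  (Finset.range q ×ˢ Finset.range q).filter (fun x => x.1 + x.2 + lam = d + c * q)

lemma mem_Pset (c N : ℕ) (x : ℕ × ℕ) : x ∈ Pset c N ↔ x.1 + x.2 + c = N := by
  simp only [Pset, mem_filter, mem_product, mem_range]; omega

lemma mem_Uset (q lam c d : ℕ) (x : ℕ × ℕ) :
    x ∈ Uset q lam c d ↔ (x.1 < q ∧ x.2 < q) ∧ x.1 + x.2 + lam = d + c * q := by
  simp only [Uset, mem_filter, mem_product, mem_range]

lemma conv_sum {R : Type*} [AddCommMonoid R] (q N d lam : ℕ) (hd : d < q) (hl : lam ≤ 1)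
    (F : ℕ → ℕ → R) :
    ∑ x ∈ Pset lam (q * N + d), F x.1 x.2 =
      ∑ c ∈ range 2, ∑ a ∈ Uset q lam c d, ∑ y ∈ Pset c N,
        F (q * y.1 + a.1) (q * y.2 + a.2) := by
  have h1 : ∀ c, ∑ a ∈ Uset q lam c d, ∑ y ∈ Pset c N, F (q * y.1 + a.1) (q * y.2 + a.2)
      = ∑ z ∈ Uset q lam c d ×ˢ Pset c N, F (q * z.2.1 + z.1.1) (q * z.2.2 + z.1.2) := by
    intro c; rw [Finset.sum_product]
  simp_rw [h1]
  rw [Finset.sum_sigma']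
  have hq : 0 < q := by omega
  refine Finset.sum_nbij'
    (fun x => ⟨(x.1 % q + x.2 % q + lam) / q, ((x.1 % q, x.2 % q), (x.1 / q, x.2 / q))⟩)
    (fun z => (q * z.2.2.1 + z.2.1.1, q * z.2.2.2 + z.2.1.2)) ?_ ?_ ?_ ?_ ?_
  · rintro ⟨m, k⟩ hx
    simp only [mem_Pset] at hx
    simp only [mem_sigma, mem_product, mem_Uset, mem_Pset, mem_range]
    have hm := Nat.mod_lt m hq
    have hk := Nat.mod_lt k hq
    have em := Nat.div_add_mod m q
    have ek := Nat.div_add_mod k q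
    generalize m % q = a at *
    generalize k % q = b at *
    generalize m / q = M at *
    generalize k / q = K at *
    have key : q * (M + K) + (a + b + lam) = q * N + d := by
      rw [← hx, ← em, ← ek]; ring
    have ec := Nat.div_add_mod (a + b + lam) q
    have hc := Nat.mod_lt (a + b + lam) hq
    generalize (a + b + lam) % q = e at *
    generalize hcc : (a + b + lam) / q = c at *
    have key2 : q * (M + K + c) + e = q * N + d := by rw [← key, ← ec]; ring
    have hde : e = d := by
      have := congrArg (· % q) key2
      simpa [Nat.mul_add_mod, Nat.mod_eq_of_lt hc, Nat.mod_eq_of_lt hd] using this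
    subst hde
    refine ⟨?_, ⟨⟨hm, hk⟩, ?_⟩, ?_⟩
    · rw [← hcc, Nat.div_lt_iff_lt_mul hq]; omega
    · rw [← ec]; ring
    · exact Nat.eq_of_mul_eq_mul_left hq (by omega)
  · rintro ⟨c, ⟨a, b⟩, ⟨M, K⟩⟩ hz
    simp only [mem_sigma, mem_product, mem_Uset, mem_Pset, mem_range] at hz ⊢
    obtain ⟨hc, ⟨⟨ha, hb⟩, h⟩, h'⟩ := hz
    rw [← h']
    linarith
  · rintro ⟨m, k⟩ hx
    simp only [Nat.div_add_mod]
  · rintro ⟨c, ⟨a, b⟩, ⟨M, K⟩⟩ hz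
    simp only [mem_sigma, mem_product, mem_Uset, mem_Pset, mem_range] at hz
    obtain ⟨hc, ⟨⟨ha, hb⟩, h⟩, h'⟩ := hz
    simp only [Nat.mul_add_mod, Nat.mod_eq_of_lt ha, Nat.mod_eq_of_lt hb,
      Nat.mul_add_div hq, Nat.div_eq_of_lt ha, Nat.div_eq_of_lt hb, h, add_zero,
      Nat.add_mul_div_right _ _ hq, Nat.div_eq_of_lt hd, zero_add]
  · rintro ⟨m, k⟩ hx
    simp only [Nat.div_add_mod]

/-- valuation of the factorial -/
def vfac (p n : ℕ) : ℕ := padicValNat p n.factorial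

lemma vfac_mul_add (p : ℕ) [Fact p.Prime] (M a : ℕ) (ha : a < p) :
    vfac p (p * M + a) = vfac p M + M := by
  rw [vfac, padicValNat_factorial_mul_add _ ha, padicValNat_factorial_mul, vfac]

lemma vfac_le (p : ℕ) [hp : Fact p.Prime] (M K N : ℕ) (h : M + K ≤ N) :
    vfac p M + vfac p K ≤ vfac p N := by
  unfold vfac
  rw [← padicValNat.mul (Nat.factorial_ne_zero _) (Nat.factorial_ne_zero _)]
  rw [← padicValNat_dvd_iff_le (Nat.factorial_ne_zero _)]
  exact pow_padicValNat_dvd.trans ((Nat.factorial_mul_factorial_dvd_factorial_add M K).trans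
    (Nat.factorial_dvd_factorial h))

/-- the two generating polynomials -/
noncomputable def Gpoly (p c N : ℕ) : Polynomial ℤ :=
  ∑ y ∈ Pset c N, Polynomial.X ^ ((c : ℤ) + vfac p N - vfac p y.1 - vfac p y.2).toNat

lemma Gpoly_rec (p : ℕ) [Fact p.Prime] (N d lam : ℕ) (hd : d < p) (hl : lam ≤ 1) :
    Gpoly p lam (p * N + d) =
      ∑ c ∈ range 2, ((Uset p lam c d).card : Polynomial ℤ) *
        (Polynomial.X ^ lam * Gpoly p c N) := by
  unfold Gpoly
  rw [conv_sum p N d lam hd hl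
    (fun m k => Polynomial.X ^ ((lam : ℤ) + vfac p (p * N + d) - vfac p m - vfac p k).toNat)]
  refine Finset.sum_congr rfl fun c _ => ?_
  rw [← nsmul_eq_mul, ← Finset.sum_const]
  refine Finset.sum_congr rfl fun a ha => ?_
  rw [Finset.mul_sum]
  refine Finset.sum_congr rfl fun y hy => ?_
  rw [mem_Uset] at ha
  rw [mem_Pset] at hy
  rw [← pow_add]
  congr 1
  rw [vfac_mul_add p _ _ hd, vfac_mul_add p _ _ ha.1.1, vfac_mul_add p _ _ ha.1.2]
  have := vfac_le p y.1 y.2 N (by omega)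
  omega

lemma card_U00 (p d : ℕ) (hd : d < p) : (Uset p 0 0 d).card = d + 1 := by
  rw [← Finset.card_range (d + 1)]
  refine Finset.card_nbij' (fun x => x.1) (fun a => (a, d - a)) ?_ ?_ ?_ ?_ <;>
    simp [Set.MapsTo, Set.LeftInvOn, mem_Uset, Prod.ext_iff] <;> omega

lemma card_U01 (p d : ℕ) : (Uset p 0 1 d).card = p - (d + 1) := by
  rw [← Nat.card_Ico (d + 1) p]
  refine Finset.card_nbij' (fun x => x.1) (fun a => (a, d + p - a)) ?_ ?_ ?_ ?_ <;>
    simp [Set.MapsTo, Set.LeftInvOn, mem_Uset, Prod.ext_iff] <;> omega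

lemma card_U10 (p d : ℕ) (hd : d < p) : (Uset p 1 0 d).card = d := by
  conv_rhs => rw [← Finset.card_range d]
  refine Finset.card_nbij' (fun x => x.1) (fun a => (a, d - 1 - a)) ?_ ?_ ?_ ?_ <;>
    simp [Set.MapsTo, Set.LeftInvOn, mem_Uset, Prod.ext_iff] <;> omega

lemma card_U11 (p d : ℕ) : (Uset p 1 1 d).card = p - d := by
  rw [← Nat.card_Ico d p]
  refine Finset.card_nbij' (fun x => x.1) (fun a => (a, d + p - 1 - a)) ?_ ?_ ?_ ?_ <;>
    simp [Set.MapsTo, Set.LeftInvOn, mem_Uset, Prod.ext_iff] <;> omega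

lemma Gpoly_vec (p : ℕ) [hp : Fact p.Prime] (N : ℕ) :
    ((Nat.digits p N).map (Mmat p)).prod * (!![1; 0] : Matrix (Fin 2) (Fin 1) (Polynomial ℤ))
      = !![Gpoly p 0 N; Gpoly p 1 N] := by
  induction N using Nat.strong_induction_on with
  | _ N ih =>
    rcases Nat.eq_zero_or_pos N with rfl | hN
    · have h0 : Pset 0 0 = {(0, 0)} := by decide
      have h1 : Pset 1 0 = ∅ := by decide
      simp [Gpoly, h0, h1]
    · have h1 := hp.out.one_lt
      have hd : N % p < p := Nat.mod_lt _ (by omega)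
      rw [Nat.digits_def' h1 hN, List.map_cons, List.prod_cons, Matrix.mul_assoc,
        ih (N / p) (Nat.div_lt_self hN h1)]
      have e0 := Gpoly_rec p (N / p) (N % p) 0 hd (by omega)
      have e1 := Gpoly_rec p (N / p) (N % p) 1 hd (by omega)
      rw [Nat.div_add_mod] at e0 e1
      simp only [Finset.sum_range_succ, Finset.sum_range_zero, card_U00 p _ hd, card_U01 p _,
        card_U10 p _ hd, card_U11 p _, Nat.cast_sub hd.le,
        Nat.cast_sub (show N % p + 1 ≤ p from hd)] at e0 e1
      rw [e0, e1]
      clear e0 e1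
      generalize N % p = d at *
      refine Matrix.ext fun i j => ?_
      fin_cases i <;> fin_cases j <;>
        simp [Mmat, Matrix.mul_apply, Fin.sum_univ_two, -mul_eq_mul_right_iff] <;> ring

section val
variable {Cs : ℕ → ℤ} {p : ℕ} {α : ℕ → ℕ} {s : ℕ}

lemma rank_dvd_iff (hC : IsStrongDivSeq Cs) {m a j : ℕ} (h : IsRank Cs m a) (hj : 1 ≤ j) :
    (m : ℤ) ∣ Cs j ↔ a ∣ j := by
  obtain ⟨ha, hd, hmin⟩ := h
  have hg := hC.2 j a hj ha
  constructor
  · intro hm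
    have h1 : (m : ℤ) ∣ Cs (Nat.gcd a j) := by
      rw [← Int.dvd_natAbs, ← hg]
      exact Int.dvd_coe_gcd hd hm
    have h2 := hmin _ (Nat.gcd_pos_of_pos_left _ ha) h1
    have h3 : Nat.gcd a j = a := le_antisymm (Nat.gcd_le_left _ ha) h2
    rw [← h3]; exact Nat.gcd_dvd_right _ _
  · intro haj
    rw [Nat.gcd_eq_left haj] at hg
    have : Cs a ∣ Cs j := by
      rw [← Int.natAbs_dvd, ← hg]
      exact Int.gcd_dvd_right _ _
    exact hd.trans this

lemma le_val_iff [Fact p.Prime] (hC : IsStrongDivSeq Cs) (hacc : AcceptablePrime Cs p α s)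
    {k j : ℕ} (hk : 1 ≤ k) (hj : 1 ≤ j) : k ≤ padicValInt p (Cs j) ↔ α k ∣ j := by
  rw [← rank_dvd_iff hC (hacc.2.1 k hk) hj, Nat.cast_pow, padicValInt_dvd_iff]
  simp [hC.1 j hj]

lemma alpha_dvd [Fact p.Prime] (hC : IsStrongDivSeq Cs) (hacc : AcceptablePrime Cs p α s)
    {j k : ℕ} (hj : 1 ≤ j) (hjk : j ≤ k) : α j ∣ α k := by
  have h1 := (hacc.2.1 k (by omega)).1
  rw [← le_val_iff hC hacc hj h1]
  exact hjk.trans ((le_val_iff hC hacc (by omega) h1).2 dvd_rfl)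

lemma val_C [hp : Fact p.Prime] (hC : IsStrongDivSeq Cs) (hacc : AcceptablePrime Cs p α s)
    {m : ℕ} (hm : 1 ≤ m) :
    padicValInt p (Cs m) = (∑ j ∈ Finset.Icc 1 s, if α j ∣ m then 1 else 0)
      + if α s ∣ m then padicValNat p (m / α s) else 0 := by
  have hs := hacc.1
  have hpos := (hacc.2.1 s hs).1
  rw [← Finset.card_filter]
  by_cases h : α s ∣ m
  · rw [if_pos h, Finset.filter_true_of_mem (fun j hj =>
      (alpha_dvd hC hacc (mem_Icc.1 hj).1 (mem_Icc.1 hj).2).trans h), Nat.card_Icc]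
    obtain ⟨t, rfl⟩ := h
    have ht : t ≠ 0 := by rintro rfl; simp at hm
    rw [Nat.mul_div_cancel_left _ hpos]
    have key : ∀ e, 1 ≤ e → (s + e ≤ padicValInt p (Cs (α s * t)) ↔ e ≤ padicValNat p t) := by
      intro e he
      rw [le_val_iff hC hacc (by omega) hm, hacc.2.2 _ (by omega), Nat.add_sub_cancel_left,
        mul_comm, Nat.mul_dvd_mul_iff_left hpos, padicValNat_dvd_iff_le ht]
    have h0 : s ≤ padicValInt p (Cs (α s * t)) :=
      (le_val_iff hC hacc hs hm).2 (dvd_mul_right _ _)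
    have k1 := key (padicValNat p t + 1) (by omega)
    have k2 := key (padicValNat p t)
    omega
  · rw [if_neg h]
    have h0 : ¬ s ≤ padicValInt p (Cs m) := fun hh => h ((le_val_iff hC hacc hs hm).1 hh)
    have : (Finset.Icc 1 s).filter (fun j => α j ∣ m) = Finset.Icc 1 (padicValInt p (Cs m)) := by
      ext j
      simp only [mem_filter, mem_Icc]
      constructor
      · rintro ⟨⟨h1, h2⟩, h3⟩
        exact ⟨h1, (le_val_iff hC hacc h1 hm).2 h3⟩
      · rintro ⟨h1, h2⟩
        exact ⟨⟨h1, by omega⟩, (le_val_iff hC hacc h1 hm).1 h2⟩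
    rw [this, Nat.card_Icc]; omega

lemma Corial_ne_zero (hC : IsStrongDivSeq Cs) (n : ℕ) : Corial Cs n ≠ 0 := by
  induction n with
  | zero => simp [Corial]
  | succ n ih => exact mul_ne_zero ih (hC.1 _ (by omega))

lemma val_Corial [hp : Fact p.Prime] (hC : IsStrongDivSeq Cs) (hacc : AcceptablePrime Cs p α s)
    (n : ℕ) : padicValInt p (Corial Cs n) =
      (∑ j ∈ Finset.Icc 1 s, n / α j) + vfac p (n / α s) := by
  induction n with
  | zero => simp [Corial, vfac]
  | succ n ih =>
    rw [Corial, padicValInt.mul (Corial_ne_zero hC n) (hC.1 _ (by omega)), ih,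
      val_C hC hacc (by omega)]
    simp_rw [Nat.succ_div]
    rw [Finset.sum_add_distrib]
    by_cases h : α s ∣ n + 1
    · rw [if_pos h, if_pos h, vfac, vfac, Nat.factorial_succ,
        padicValNat.mul (Nat.succ_ne_zero _) (Nat.factorial_ne_zero _)]
      ring
    · rw [if_neg h, if_neg h, add_zero, add_zero]; ring

lemma val_Corial' [hp : Fact p.Prime] (hC : IsStrongDivSeq Cs) (hacc : AcceptablePrime Cs p α s)
    (N r : ℕ) (hr : r < α s) : padicValInt p (Corial Cs (α s * N + r)) =
      N * (∑ j ∈ Finset.Icc 1 s, α s / α j) + (∑ j ∈ Finset.Icc 1 s, r / α j) + vfac p N := by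
  rw [val_Corial hC hacc, Nat.mul_add_div (by omega), Nat.div_eq_of_lt hr, add_zero,
    Finset.mul_sum, ← Finset.sum_add_distrib]
  congr 1
  refine Finset.sum_congr rfl fun j hj => ?_
  have hj := mem_Icc.1 hj
  have hpos := (hacc.2.1 j hj.1).1
  obtain ⟨t, ht⟩ := alpha_dvd hC hacc hj.1 hj.2
  rw [ht, Nat.mul_div_cancel_left _ hpos, mul_assoc, Nat.mul_add_div hpos, mul_comm]

lemma f_nonneg [hp : Fact p.Prime] (hC : IsStrongDivSeq Cs) (hacc : AcceptablePrime Cs p α s)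
    {c r r1 r2 : ℕ} (hr : r < α s) (h1 : r1 < α s) (h2 : r2 < α s)
    (h : r1 + r2 = r + c * α s) : 0 ≤ fCnom α s c r r1 r2 - c := by
  have hs := hacc.1
  unfold fCnom
  rw [Finset.mul_sum, ← Finset.sum_add_distrib]
  have hpos := (hacc.2.1 s hs).1
  have hterm : ∀ j ∈ Finset.Icc 1 s, (0 : ℤ) ≤ (c : ℤ) * ((α s / α j : ℕ) : ℤ) +
      (((r / α j : ℕ) : ℤ) - ((r1 / α j : ℕ) : ℤ) - ((r2 / α j : ℕ) : ℤ)) := by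
    intro j hj
    have hj := mem_Icc.1 hj
    have hposj := (hacc.2.1 j hj.1).1
    obtain ⟨t, ht⟩ := alpha_dvd hC hacc hj.1 hj.2
    have e : r1 / α j + r2 / α j ≤ (r1 + r2) / α j := Nat.div_add_div_le_add_div
    rw [h, ht, show r + c * (α j * t) = α j * (c * t) + r by ring, Nat.mul_add_div hposj] at e
    rw [ht, Nat.mul_div_cancel_left _ hposj]
    have e2 : (((r1 / α j + r2 / α j : ℕ)) : ℤ) ≤ ((c * t + r / α j : ℕ) : ℤ) := Int.ofNat_le.2 e
    rw [Nat.cast_add, Nat.cast_add, Nat.cast_mul] at e2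
    linarith
  have := Finset.single_le_sum hterm (mem_Icc.2 ⟨hs, le_rfl⟩)
  rw [Nat.div_self hpos, Nat.div_eq_of_lt hr, Nat.div_eq_of_lt h1, Nat.div_eq_of_lt h2] at this
  simp only [Nat.cast_one, Nat.cast_zero] at this
  linarith

lemma Tpoly_eq [hp : Fact p.Prime] (hC : IsStrongDivSeq Cs) (hacc : AcceptablePrime Cs p α s)
    (N r : ℕ) (hr : r < α s) :
    Tpoly p Cs (α s * N + r) = ∑ c ∈ range 2, uCnom α s c r * Gpoly p c N := by
  have hP : ∀ n, Pset 0 n = Finset.HasAntidiagonal.antidiagonal n := by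
    intro n; ext x; simp [mem_Pset]
  have h1 : ∀ n, Tpoly p Cs n = ∑ x ∈ Pset 0 n, Polynomial.X ^
      ((padicValInt p (Corial Cs n) : ℤ) - (padicValInt p (Corial Cs x.1) : ℤ)
        - (padicValInt p (Corial Cs x.2) : ℤ)).toNat := by
    intro n
    rw [hP, Finset.Nat.sum_antidiagonal_eq_sum_range_succ (fun m k => (Polynomial.X : Polynomial ℤ) ^
      ((padicValInt p (Corial Cs n) : ℤ) - (padicValInt p (Corial Cs m) : ℤ)
        - (padicValInt p (Corial Cs k) : ℤ)).toNat)]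
    rfl
  rw [h1, conv_sum (α s) N r 0 hr (by omega) (fun m k => (Polynomial.X : Polynomial ℤ) ^
      ((padicValInt p (Corial Cs (α s * N + r)) : ℤ) - (padicValInt p (Corial Cs m) : ℤ)
        - (padicValInt p (Corial Cs k) : ℤ)).toNat)]
  refine Finset.sum_congr rfl fun c _ => ?_
  have hu : uCnom α s c r = ∑ q ∈ Uset (α s) 0 c r,
    Polynomial.X ^ (fCnom α s c r q.1 q.2 - c).toNat := rfl
  rw [hu, Gpoly, Finset.sum_mul]
  refine Finset.sum_congr rfl fun a ha => ?_
  rw [Finset.mul_sum]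
  refine Finset.sum_congr rfl fun y hy => ?_
  rw [mem_Uset] at ha
  rw [mem_Pset] at hy
  have hf := f_nonneg hC hacc hr ha.1.1 ha.1.2 ha.2
  have hv := vfac_le p y.1 y.2 N (by omega)
  rw [← pow_add, ← Int.toNat_add hf (by omega)]
  congr 2
  rw [val_Corial' hC hacc _ _ hr, val_Corial' hC hacc _ _ ha.1.1, val_Corial' hC hacc _ _ ha.1.2,
    ← hy]
  unfold fCnom
  simp only [Finset.sum_sub_distrib]
  push_cast
  ring

end val

theorem stmt1 (Cs : ℕ → ℤ) (p : ℕ) (hp : p.Prime) (α : ℕ → ℕ) (s : ℕ)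
    (hC : IsStrongDivSeq Cs) (hacc : AcceptablePrime Cs p α s)
    (n r : ℕ) (hr : r < α s) :
    Tpoly p Cs (α s * n + r) =
      (!![uCnom α s 0 r, uCnom α s 1 r] *
        ((Nat.digits p n).map (Mmat p)).prod * (!![1; 0] : Matrix (Fin 2) (Fin 1) (Polynomial ℤ))) 0 0 := by

  haveI : Fact p.Prime := ⟨hp⟩
  rw [Matrix.mul_assoc, Gpoly_vec, Tpoly_eq hC hacc n r hr]
  simp [Matrix.mul_apply, Fin.sum_univ_two, Finset.sum_range_succ]
end

section
/- Let C be a strong divisibility sequence and p a prime such that the rank of apparition α(p^k) exists for all k ≥ 1. Then for every integer n ≥ 0, ν_p(n!_C) = Σ_{k ≥ 1} ⌊n / α(p^k)⌋, where all but finitely many terms of the sum are zero. -/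
open Finset

theorem aux_dvd (Cs : ℕ → ℤ) (hC : IsStrongDivSeq Cs) (q a m : ℕ) (h : IsRank Cs q a)
    (hm : 1 ≤ m) : (q : ℤ) ∣ Cs m ↔ a ∣ m := by
  obtain ⟨h1, h2, h3⟩ := h
  have hg := hC.2 a m h1 hm
  constructor
  · intro hd
    have h4 : (q : ℤ) ∣ ((Int.gcd (Cs m) (Cs a) : ℕ) : ℤ) := Int.dvd_coe_gcd hd h2
    rw [hg, Int.dvd_natAbs] at h4
    have h5 := h3 _ (Nat.gcd_pos_of_pos_left a hm) h4
    have h6 : Nat.gcd m a = a := le_antisymm (Nat.gcd_le_right m h1) h5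
    exact h6 ▸ Nat.gcd_dvd_left m a
  · intro hd
    rw [Nat.gcd_eq_right hd] at hg
    have h4 : ((Int.gcd (Cs m) (Cs a) : ℕ) : ℤ) ∣ Cs m := Int.gcd_dvd_left _ _
    rw [hg, Int.natAbs_dvd] at h4
    exact h2.trans h4

theorem aux_ne (Cs : ℕ → ℤ) (hC : IsStrongDivSeq Cs) (n : ℕ) : Corial Cs n ≠ 0 := by
  induction n with
  | zero => simp [Corial]
  | succ n ih => exact mul_ne_zero ih (hC.1 _ (by omega))

theorem aux_val (p : ℕ) (hp : p.Prime) (x : ℤ) (hx : x ≠ 0) (k : ℕ) :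
    ((p ^ k : ℕ) : ℤ) ∣ x ↔ k ≤ padicValInt p x := by
  have := Fact.mk hp
  push_cast
  rw [padicValInt_dvd_iff]
  simp [hx]

theorem aux_sum (Cs : ℕ → ℤ) (p : ℕ) (hp : p.Prime) (α : ℕ → ℕ)
    (hC : IsStrongDivSeq Cs) (hα : ∀ k, 1 ≤ k → IsRank Cs (p ^ k) (α k)) (B n : ℕ)
    (hB : ∀ m, 1 ≤ m → m ≤ n → padicValInt p (Cs m) < B) :
    padicValInt p (Corial Cs n) = ∑ k ∈ Finset.Ico 1 B, n / α k := by
  have := Fact.mk hp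
  induction n with
  | zero => simp [Corial]
  | succ n ih =>
    have h0 := hC.1 (n + 1) (by omega)
    rw [Corial, padicValInt.mul (aux_ne Cs hC n) h0, ih (fun m h1 h2 => hB m h1 (by omega))]
    simp only [Nat.succ_div, Finset.sum_add_distrib]
    congr 1
    rw [← Finset.card_filter]
    have : Finset.filter (fun k => α k ∣ n + 1) (Finset.Ico 1 B)
        = Finset.Icc 1 (padicValInt p (Cs (n + 1))) := by
      ext k
      have hb := hB (n + 1) (by omega) le_rfl
      simp only [Finset.mem_filter, Finset.mem_Ico, Finset.mem_Icc]
      constructor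
      · rintro ⟨⟨h1, h2⟩, h3⟩
        exact ⟨h1, (aux_val p hp _ h0 k).1 ((aux_dvd Cs hC _ _ _ (hα k h1) (by omega)).2 h3)⟩
      · rintro ⟨h1, h2⟩
        exact ⟨⟨h1, by omega⟩,
          (aux_dvd Cs hC _ _ _ (hα k h1) (by omega)).1 ((aux_val p hp _ h0 k).2 h2)⟩
    rw [this]
    simp

theorem stmt4 (Cs : ℕ → ℤ) (p : ℕ) (hp : p.Prime) (α : ℕ → ℕ)
    (hC : IsStrongDivSeq Cs) (hα : ∀ k, 1 ≤ k → IsRank Cs (p ^ k) (α k))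
    (n : ℕ) :
    {k : ℕ | 1 ≤ k ∧ n / α k ≠ 0}.Finite ∧
      padicValInt p (Corial Cs n) = ∑ᶠ k ∈ Set.Ici 1, n / α k := by
  obtain ⟨B, hB⟩ : ∃ B, ∀ m, 1 ≤ m → m ≤ n → padicValInt p (Cs m) < B := by
    refine ⟨(Finset.range (n + 1)).sup (fun m => padicValInt p (Cs m)) + 1, fun m _ h2 => ?_⟩
    exact Nat.lt_succ_of_le
      (Finset.le_sup (f := fun m => padicValInt p (Cs m)) (Finset.mem_range.2 (by omega)))
  have key : ∀ k, 1 ≤ k → n / α k ≠ 0 → k < B := by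
    intro k hk h
    obtain ⟨h1, h2, h3⟩ := hα k hk
    have hle : α k ≤ n := by
      by_contra hlt
      exact h (Nat.div_eq_of_lt (by omega))
    have := (aux_val p hp _ (hC.1 _ h1) k).1 h2
    exact lt_of_le_of_lt this (hB _ h1 hle)
  refine ⟨(Set.finite_lt_nat B).subset fun k hk => key k hk.1 hk.2, ?_⟩
  rw [aux_sum Cs p hp α hC hα B n hB]
  symm
  apply finsum_mem_eq_sum_of_inter_support_eq
  ext k
  simp only [Set.mem_inter_iff, Set.mem_Ici, Function.mem_support, Finset.coe_Ico, Set.mem_Ico]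
  constructor
  · rintro ⟨h1, h2⟩
    exact ⟨⟨h1, key k h1 h2⟩, h2⟩
  · rintro ⟨⟨h1, _⟩, h2⟩
    exact ⟨h1, h2⟩
end

section
/- Let C be a strong divisibility sequence, let p be an ideal prime for C with parameter s = s(p), and write α = α(p). Let n = α·n' + r, m_1 = α·m_1' + r_1, m_2 = α·m_2' + r_2 with n', m_1', m_2' ≥ 0, 0 ≤ r, r_1, r_2 < α, and m_1 + m_2 = n. Then ν_p(binom(n, m_1)_C) = s·(n' − m_1' − m_2') + ν_p(n'!) − ν_p(m_1'!) − ν_p(m_2'!). -/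
open Finset

/-- `p` is an ideal prime for `Cs`, with `α k` the rank of apparition of `p ^ k`
and parameter `s = s(p)`. -/
def IdealPrime (Cs : ℕ → ℤ) (p : ℕ) (α : ℕ → ℕ) (s : ℕ) : Prop :=
  1 ≤ s ∧ (∀ k, 1 ≤ k → IsRank Cs (p ^ k) (α k)) ∧
  (∀ k, 1 ≤ k → k ≤ s → α k = α 1) ∧
  (∀ k, s < k → α k = p ^ (k - s) * α 1)

theorem aux_dvd_s7 (Cs : ℕ → ℤ) (p : ℕ) (α : ℕ → ℕ) (s : ℕ)
    (hC : IsStrongDivSeq Cs) (hid : IdealPrime Cs p α s) (k j : ℕ) (hk : 1 ≤ k) (hj : 1 ≤ j) :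
    p ^ k ∣ (Cs j).natAbs ↔ α k ∣ j := by
  obtain ⟨h1, h2, h3⟩ := hid.2.1 k hk
  have h2' : p ^ k ∣ (Cs (α k)).natAbs := Int.natCast_dvd.mp h2
  have hg := hC.2 (α k) j h1 hj
  have hpos : 1 ≤ Nat.gcd j (α k) := Nat.gcd_pos_of_pos_left _ hj
  constructor
  · intro h
    have h4 : p ^ k ∣ (Cs (Nat.gcd j (α k))).natAbs := by
      rw [← hg]
      exact Nat.dvd_gcd h h2'
    have h5 := h3 _ hpos (Int.natCast_dvd.mpr h4)
    have h6 : Nat.gcd j (α k) = α k := le_antisymm (Nat.gcd_le_right _ h1) h5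
    rw [← h6]
    exact Nat.gcd_dvd_left _ _
  · intro h
    rw [Nat.gcd_eq_right h] at hg
    rw [← hg] at h2'
    exact h2'.trans (Nat.gcd_dvd_left _ _)

theorem aux_val_s7 (Cs : ℕ → ℤ) (p : ℕ) (hp : p.Prime) (α : ℕ → ℕ) (s : ℕ)
    (hC : IsStrongDivSeq Cs) (hid : IdealPrime Cs p α s) (t : ℕ) (ht : 1 ≤ t) :
    padicValInt p (Cs (α 1 * t)) = s + padicValNat p t := by
  have := Fact.mk hp
  have ha : 1 ≤ α 1 := (hid.2.1 1 le_rfl).1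
  have hj : 1 ≤ α 1 * t := Nat.mul_pos ha ht
  have hne : (Cs (α 1 * t)).natAbs ≠ 0 := Int.natAbs_ne_zero.mpr (hC.1 _ hj)
  have key : ∀ k, 1 ≤ k → (k ≤ padicValInt p (Cs (α 1 * t)) ↔ k ≤ s + padicValNat p t) := by
    intro k hk
    unfold padicValInt
    rw [← padicValNat_dvd_iff_le hne, aux_dvd_s7 Cs p α s hC hid k _ hk hj]
    rcases Nat.lt_or_ge s k with h | h
    · rw [hid.2.2.2 k h, mul_comm, Nat.mul_dvd_mul_iff_left ha,
        padicValNat_dvd_iff_le (by omega)]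
      omega
    · rw [hid.2.2.1 k hk h]
      exact ⟨fun _ => by omega, fun _ => dvd_mul_right _ _⟩
  have hs := hid.1
  apply le_antisymm
  · rcases Nat.eq_zero_or_pos (padicValInt p (Cs (α 1 * t))) with h | h
    · omega
    · exact (key _ h).mp le_rfl
  · exact (key _ (by omega)).mpr le_rfl

theorem aux_corial (Cs : ℕ → ℤ) (p : ℕ) (hp : p.Prime) (α : ℕ → ℕ) (s : ℕ)
    (hC : IsStrongDivSeq Cs) (hid : IdealPrime Cs p α s) (n : ℕ) :
    Corial Cs n ≠ 0 ∧ padicValInt p (Corial Cs n) =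
      s * (n / α 1) + padicValNat p (Nat.factorial (n / α 1)) := by
  have := Fact.mk hp
  have ha : 1 ≤ α 1 := (hid.2.1 1 le_rfl).1
  induction n with
  | zero => simp [Corial]
  | succ n ih =>
    obtain ⟨h0, ih⟩ := ih
    have hc := hC.1 (n + 1) (by omega)
    refine ⟨mul_ne_zero h0 hc, ?_⟩
    rw [Corial, padicValInt.mul h0 hc, ih, Nat.succ_div]
    split_ifs with h
    · have hq : n + 1 = α 1 * (n / α 1 + 1) := by
        have h7 := Nat.succ_div (a := n) (b := α 1)
        rw [if_pos h] at h7
        rw [← h7, Nat.mul_div_cancel' h]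
      have hv := aux_val_s7 Cs p hp α s hC hid (n / α 1 + 1) (Nat.succ_pos _)
      rw [← hq] at hv
      rw [hv, Nat.factorial_succ, padicValNat.mul (Nat.succ_ne_zero _) (Nat.factorial_ne_zero _)]
      ring
    · have hz : padicValInt p (Cs (n + 1)) = 0 := by
        apply padicValNat.eq_zero_of_not_dvd
        intro h8
        exact h ((aux_dvd_s7 Cs p α s hC hid 1 (n + 1) le_rfl (by omega)).mp (by simpa using h8))
      rw [hz]
      rfl

theorem stmt7 (Cs : ℕ → ℤ) (p : ℕ) (hp : p.Prime) (α : ℕ → ℕ) (s : ℕ)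
    (hC : IsStrongDivSeq Cs) (hid : IdealPrime Cs p α s)
    (n n' r m1 m1' r1 m2 m2' r2 : ℕ)
    (hn : n = α 1 * n' + r) (hm1 : m1 = α 1 * m1' + r1) (hm2 : m2 = α 1 * m2' + r2)
    (hr : r < α 1) (hr1 : r1 < α 1) (hr2 : r2 < α 1) (hsum : m1 + m2 = n) :
    nuCnomial p Cs n m1 =
      (s : ℤ) * ((n' : ℤ) - m1' - m2') + (padicValNat p (Nat.factorial n') : ℤ)
        - (padicValNat p (Nat.factorial m1') : ℤ)
        - (padicValNat p (Nat.factorial m2') : ℤ) := by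
  have hd : ∀ q u, u < α 1 → (α 1 * q + u) / α 1 = q := by
    intro q u hu
    rw [Nat.mul_add_div (by omega), Nat.div_eq_of_lt hu, add_zero]
  have e : n - m1 = m2 := by omega
  have a1 := (aux_corial Cs p hp α s hC hid n).2
  have a2 := (aux_corial Cs p hp α s hC hid m1).2
  have a3 := (aux_corial Cs p hp α s hC hid m2).2
  have b1 : n / α 1 = n' := by rw [hn, hd _ _ hr]
  have b2 : m1 / α 1 = m1' := by rw [hm1, hd _ _ hr1]
  have b3 : m2 / α 1 = m2' := by rw [hm2, hd _ _ hr2]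
  unfold nuCnomial
  rw [e, a1, a2, a3, b1, b2, b3]
  push_cast
  ring
end

section
/- Let p be a prime and let n ≥ 0 have standard base-p representation n = n_ℓ ⋯ n_1 n_0. Then the matrix product M_p(n_0) · M_p(n_1) ⋯ M_p(n_ℓ) · [1, 0]^T equals the column vector whose first entry is Σ_{m=0}^{n} x^{ν_p(binom(n,m))} and whose second entry is Σ_{m=0}^{n−1} x^{1 + ν_p(n·binom(n−1,m))} (the second sum being empty, hence 0, when n = 0), where binom denotes the ordinary binomial coefficient. -/
open Finset

lemma add_choose_fact (m k : ℕ) :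
    (m + k).choose m * m.factorial * k.factorial = (m + k).factorial := by
  have h := Nat.choose_mul_factorial_mul_factorial (Nat.le_add_right m k)
  rwa [Nat.add_sub_cancel_left] at h

lemma val_low (p : ℕ) (hp : p.Prime) (n m d r : ℕ) (hm : m ≤ n) (hr : r ≤ d) (hd : d < p) :
    padicValNat p (Nat.choose (p * n + d) (p * m + r)) = padicValNat p (Nat.choose n m) := by
  have : Fact p.Prime := ⟨hp⟩
  obtain ⟨k, rfl⟩ := Nat.exists_eq_add_of_le hm
  obtain ⟨s, rfl⟩ := Nat.exists_eq_add_of_le hr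
  have h1 := congrArg (padicValNat p) (add_choose_fact m k)
  have h2 := congrArg (padicValNat p)
    (add_choose_fact (p * m + r) (p * k + s))
  have e : p * m + r + (p * k + s) = p * (m + k) + (r + s) := by ring
  rw [e] at h2
  have c1 : (m + k).choose m ≠ 0 := (Nat.choose_pos (by omega)).ne'
  have c2 : (p * (m + k) + (r + s)).choose (p * m + r) ≠ 0 :=
    (Nat.choose_pos (by rw [← e]; omega)).ne'
  rw [padicValNat.mul (mul_ne_zero c1 (Nat.factorial_ne_zero _)) (Nat.factorial_ne_zero _),
    padicValNat.mul c1 (Nat.factorial_ne_zero _)] at h1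
  rw [padicValNat.mul (mul_ne_zero c2 (Nat.factorial_ne_zero _)) (Nat.factorial_ne_zero _),
    padicValNat.mul c2 (Nat.factorial_ne_zero _),
    padicValNat_factorial_mul_add _ (by omega), padicValNat_factorial_mul_add _ (by omega),
    padicValNat_factorial_mul_add _ (by omega), padicValNat_factorial_mul,
    padicValNat_factorial_mul, padicValNat_factorial_mul] at h2
  omega

lemma val_high (p : ℕ) (hp : p.Prime) (n m d r : ℕ) (hm : m < n) (hr : d < r) (hd : r < p) :
    padicValNat p (Nat.choose (p * n + d) (p * m + r)) =
      1 + padicValNat p (n * Nat.choose (n - 1) m) := by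
  have : Fact p.Prime := ⟨hp⟩
  obtain ⟨k, rfl⟩ := Nat.exists_eq_add_of_lt hm
  obtain ⟨s, hs⟩ : ∃ s, p + d = r + s := ⟨p + d - r, by omega⟩
  have h1 : padicValNat p ((m + k + 1) * ((m + k).choose m * m.factorial * k.factorial)) =
      padicValNat p ((m + k + 1).factorial) := by
    rw [add_choose_fact m k, Nat.factorial_succ]
  have h2 := congrArg (padicValNat p)
    (add_choose_fact (p * m + r) (p * k + s))
  have e : p * m + r + (p * k + s) = p * (m + k + 1) + d := by
    linear_combination -hs
  rw [e] at h2
  have c1 : (m + k).choose m ≠ 0 := (Nat.choose_pos (by omega)).ne'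
  have c2 : (p * (m + k + 1) + d).choose (p * m + r) ≠ 0 :=
    (Nat.choose_pos (by rw [← e]; omega)).ne'
  rw [← mul_assoc, ← mul_assoc,
    padicValNat.mul (mul_ne_zero (mul_ne_zero (by omega) c1) (Nat.factorial_ne_zero _))
      (Nat.factorial_ne_zero _),
    padicValNat.mul (mul_ne_zero (by omega) c1) (Nat.factorial_ne_zero _)] at h1
  rw [padicValNat.mul (mul_ne_zero c2 (Nat.factorial_ne_zero _)) (Nat.factorial_ne_zero _),
    padicValNat.mul c2 (Nat.factorial_ne_zero _),
    padicValNat_factorial_mul_add _ (by omega), padicValNat_factorial_mul_add _ (by omega),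
    padicValNat_factorial_mul_add _ (by omega), padicValNat_factorial_mul,
    padicValNat_factorial_mul, padicValNat_factorial_mul] at h2
  rw [Nat.add_sub_cancel]
  omega

lemma sum_blocks {R : Type*} [AddCommMonoid R] (p n : ℕ) (f : ℕ → R) :
    ∑ i ∈ Finset.range (p * n), f i =
      ∑ k ∈ Finset.range n, ∑ r ∈ Finset.range p, f (p * k + r) := by
  induction n with
  | zero => simp
  | succ n ih => rw [Nat.mul_succ, Finset.sum_range_add, ih, Finset.sum_range_succ]

/-- first entry -/
noncomputable def Apoly (p n : ℕ) : Polynomial ℤ :=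
  ∑ m ∈ Finset.range (n + 1), Polynomial.X ^ padicValNat p (Nat.choose n m)

/-- second entry -/
noncomputable def Bpoly (p n : ℕ) : Polynomial ℤ :=
  ∑ m ∈ Finset.range n, Polynomial.X ^ (1 + padicValNat p (n * Nat.choose (n - 1) m))

lemma Apoly_rec (p : ℕ) (hp : p.Prime) (n d : ℕ) (hd : d < p) :
    Apoly p (p * n + d) = ((d : Polynomial ℤ) + 1) * Apoly p n +
      ((p : Polynomial ℤ) - d - 1) * Bpoly p n := by
  obtain ⟨q, rfl⟩ := Nat.exists_eq_add_of_lt hd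
  set p := d + q + 1 with hpq
  have hblock : ∀ k ∈ Finset.range n, ∑ r ∈ Finset.range p,
      (Polynomial.X : Polynomial ℤ) ^ padicValNat p (Nat.choose (p * n + d) (p * k + r)) =
      ((d : Polynomial ℤ) + 1) * Polynomial.X ^ padicValNat p (Nat.choose n k) +
      (q : Polynomial ℤ) * Polynomial.X ^ (1 + padicValNat p (n * Nat.choose (n - 1) k)) := by
    intro k hk
    rw [Finset.mem_range] at hk
    have e : Finset.range p = Finset.range ((d + 1) + q) := by congr 1; omega
    rw [e, Finset.sum_range_add]
    congr 1
    · rw [Finset.sum_congr rfl (fun r hr => by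
        rw [val_low p hp n k d r hk.le (by have := Finset.mem_range.1 hr; omega) hd])]
      simp
    · rw [Finset.sum_congr rfl (fun r hr => by
        rw [val_high p hp n k d (d + 1 + r) hk (by omega)
          (by have := Finset.mem_range.1 hr; omega)])]
      simp
  have hlast : ∑ r ∈ Finset.range (d + 1),
      (Polynomial.X : Polynomial ℤ) ^ padicValNat p (Nat.choose (p * n + d) (p * n + r)) =
      ((d : Polynomial ℤ) + 1) * Polynomial.X ^ padicValNat p (Nat.choose n n) := by
    rw [Finset.sum_congr rfl (fun r hr => by
        rw [val_low p hp n n d r le_rfl (by have := Finset.mem_range.1 hr; omega) hd])]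
    simp
  unfold Apoly Bpoly
  rw [add_assoc (p * n) d 1, Finset.sum_range_add, sum_blocks, Finset.sum_congr rfl hblock, hlast,
    Finset.sum_add_distrib, ← Finset.mul_sum, ← Finset.mul_sum, Finset.sum_range_succ]
  have hc : (p : Polynomial ℤ) = d + q + 1 := by rw [hpq]; push_cast; ring
  rw [hc]
  ring

lemma Bpoly_rec (p : ℕ) (hp : p.Prime) (n d : ℕ) (hd : d < p) :
    Bpoly p (p * n + d) = (d : Polynomial ℤ) * Polynomial.X * Apoly p n +
      ((p : Polynomial ℤ) - (d : Polynomial ℤ)) * Polynomial.X * Bpoly p n := by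
  have : Fact p.Prime := ⟨hp⟩
  rcases d with _ | d
  · unfold Bpoly
    rw [add_zero, sum_blocks]
    rw [Finset.sum_congr rfl (g := fun k => (p : Polynomial ℤ) * (Polynomial.X *
      Polynomial.X ^ (1 + padicValNat p (n * Nat.choose (n - 1) k))))]
    · rw [← Finset.mul_sum, ← Finset.mul_sum]
      push_cast
      ring
    · intro k hk
      rw [Finset.mem_range] at hk
      obtain ⟨j, rfl⟩ : ∃ j, n = j + 1 := ⟨n - 1, by omega⟩
      have hp0 := hp.pos
      have e : p * (j + 1) - 1 = p * j + (p - 1) := by rw [Nat.mul_succ]; omega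
      rw [Finset.sum_congr rfl (g := fun _ => (Polynomial.X *
        Polynomial.X ^ (1 + padicValNat p ((j + 1) * Nat.choose (j + 1 - 1) k))))]
      · simp
      · intro r hr
        rw [Finset.mem_range] at hr
        have c1 : j.choose k ≠ 0 := (Nat.choose_pos (by omega)).ne'
        have c2 : (p * j + (p - 1)).choose (p * k + r) ≠ 0 := by
          refine (Nat.choose_pos ?_).ne'
          have := Nat.mul_le_mul_left p (show k ≤ j by omega)
          omega
        rw [e, Nat.add_sub_cancel, padicValNat.mul (by positivity) c2,
          padicValNat.mul hp0.ne' (by omega), padicValNat.mul (by omega) c1, padicValNat_self,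
          val_low p hp j k (p - 1) r (by omega) (by omega) (by omega), ← pow_succ']
        congr 1
        omega
  · have key : Bpoly p (p * n + (d + 1)) = Polynomial.X * Apoly p (p * n + d) := by
      unfold Bpoly Apoly
      rw [Finset.mul_sum]
      refine Finset.sum_congr rfl (fun m hm => ?_)
      rw [Finset.mem_range] at hm
      have c : (p * n + d).choose m ≠ 0 := (Nat.choose_pos (by omega)).ne'
      have hnd : ¬ p ∣ p * n + (d + 1) := by
        rw [Nat.dvd_add_right (Dvd.intro _ rfl)]
        exact Nat.not_dvd_of_pos_of_lt (by omega) hd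
      rw [show p * n + (d + 1) - 1 = p * n + d by omega, padicValNat.mul (by omega) c,
        padicValNat.eq_zero_of_not_dvd hnd, zero_add, ← pow_succ', add_comm]
    rw [key, Apoly_rec p hp n d (by omega)]
    push_cast
    ring

theorem stmt15 (p : ℕ) (hp : p.Prime) (n : ℕ) :
    ((Nat.digits p n).map (Mmat p)).prod *
        (!![1; 0] : Matrix (Fin 2) (Fin 1) (Polynomial ℤ)) =
      !![∑ m ∈ Finset.range (n + 1),
           Polynomial.X ^ padicValNat p (Nat.choose n m);
         ∑ m ∈ Finset.range n,
           Polynomial.X ^ (1 + padicValNat p (n * Nat.choose (n - 1) m))] := by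
  change _ = !![Apoly p n; Bpoly p n]
  induction n using Nat.strong_induction_on with
  | _ n ih =>
    rcases Nat.eq_zero_or_pos n with rfl | hn
    · simp [Apoly, Bpoly]
    · have hA := Apoly_rec p hp (n / p) (n % p) (Nat.mod_lt _ hp.pos)
      have hB := Bpoly_rec p hp (n / p) (n % p) (Nat.mod_lt _ hp.pos)
      rw [Nat.div_add_mod] at hA hB
      rw [Nat.digits_def' hp.one_lt hn, List.map_cons, List.prod_cons, Matrix.mul_assoc,
        ih (n / p) (Nat.div_lt_self hn hp.one_lt), hA, hB]
      clear hA hB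
      generalize n % p = d
      ext1 i j
      fin_cases i <;> fin_cases j <;> simp [Mmat, Matrix.mul_apply, Fin.sum_univ_two]
end
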